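/- arXiv:1507.04200 — 4 statements merged into one kernel-verified Lean document; each statement's English description precedes it below -/
import Mathlib

section
/- Let ε > 0, 0 ≤ κ < 1, and set λ = ε^{3/2} κ. Suppose v, r, β are real-valued functions on a neighborhood of 0 in ℝ with v > 0, v − λ/√v > 0, and r > 0 on this neighborhood, satisfying the differential equations v'(s) = r(s) cos β(s) / (v(s) + λ/(2 √(v(s)))), r'(s) = cos β(s), and β'(s) = −2/(v(s) − λ/√(v(s))) − (r(s)²/(v(s)² − λ √(v(s))) + 1) · sin β(s) / r(s) for all s in the neighborhood, with initial values v(0) = ε, r(0) = 1, β(0) = 0. Then v is twice differentiable at 0 and v''(0) = (ε²(1 + κ/2)² + κ/4 − 1) / (ε³ (1 + κ/2)³). -/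
/-- Proof of Lemma 3.3: value of `v''(0)` for the reduced inviscid
stationary fiber spinning system in rescaled Eulerian variables. -/
theorem inviscid_second_deriv_at_nozzle
    (ε κ : ℝ) (hε : 0 < ε) (hκ0 : 0 ≤ κ) (hκ1 : κ < 1)
    (lam : ℝ) (hlam : lam = ε ^ ((3 : ℝ) / 2) * κ)
    (v r β : ℝ → ℝ)
    (hpos : ∀ᶠ s in nhds (0 : ℝ),
      0 < v s ∧ 0 < v s - lam / Real.sqrt (v s) ∧ 0 < r s)
    (hv : ∀ᶠ s in nhds (0 : ℝ),
      HasDerivAt v (r s * Real.cos (β s) / (v s + lam / (2 * Real.sqrt (v s)))) s)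
    (hr : ∀ᶠ s in nhds (0 : ℝ), HasDerivAt r (Real.cos (β s)) s)
    (hβ : ∀ᶠ s in nhds (0 : ℝ),
      HasDerivAt β (-(2 / (v s - lam / Real.sqrt (v s)))
        - ((r s) ^ 2 / ((v s) ^ 2 - lam * Real.sqrt (v s)) + 1)
          * Real.sin (β s) / r s) s)
    (hv0 : v 0 = ε) (hr0 : r 0 = 1) (hβ0 : β 0 = 0) :
    HasDerivAt (deriv v)
      ((ε ^ 2 * (1 + κ / 2) ^ 2 + κ / 4 - 1) / (ε ^ 3 * (1 + κ / 2) ^ 3)) 0 := by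
  have hv' := hv.self_of_nhds
  have hr' := hr.self_of_nhds
  have hβ' := hβ.self_of_nhds
  obtain ⟨q, hq, hqe⟩ : ∃ q : ℝ, 0 < q ∧ q = Real.sqrt ε := ⟨_, Real.sqrt_pos.mpr hε, rfl⟩
  have hεq : ε = q ^ 2 := by rw [hqe, Real.sq_sqrt hε.le]
  have hl : lam = q ^ 3 * κ := by
    rw [hlam, hεq, ← Real.rpow_natCast q 2, ← Real.rpow_mul hq.le, ← Real.rpow_natCast q 3]
    norm_num
  have hs : HasDerivAt (fun s => Real.sqrt (v s)) _ 0 :=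
    hv'.sqrt (by rw [hv0]; exact hε.ne')
  have hD : HasDerivAt (fun s => v s + lam / (2 * Real.sqrt (v s))) _ 0 :=
    hv'.add ((hasDerivAt_const (0 : ℝ) lam).div (hs.const_mul 2)
      (by rw [hv0, ← hqe]; positivity))
  have hD0 : v 0 + lam / (2 * Real.sqrt (v 0)) ≠ 0 := by
    rw [hv0, ← hqe, hl]; positivity
  have h := (hr'.mul hβ'.cos).div hD hD0
  have he : deriv v =ᶠ[nhds 0]
      fun s => r s * Real.cos (β s) / (v s + lam / (2 * Real.sqrt (v s))) :=
    hv.mono fun s hs => hs.deriv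
  refine HasDerivAt.congr_of_eventuallyEq ?_ he
  refine h.congr_deriv ?_ |>.congr_of_eventuallyEq (Filter.Eventually.of_forall fun s => rfl)
  simp only [Pi.mul_apply, hv0, hr0, hβ0, ← hqe, hl, Real.cos_zero, Real.sin_zero]
  have h1 : q ^ 2 + q ^ 3 * κ / (2 * q) = q ^ 2 * (1 + κ / 2) := by
    field_simp
  have h2 : (1 + κ / 2) ≠ 0 := by positivity
  rw [hεq, h1]
  generalize hK : 1 + κ / 2 = K at *
  field_simp
  ring
end

section
/- Let ε > 0 and 0 ≤ κ < 1. Suppose u, r, β are real-valued functions on a neighborhood of 0 in ℝ with u > 0, r > 0, and u − κ/√u > 0 on this neighborhood, satisfying for all t in the neighborhood: ε² u'(t) (1 + κ/(2 u(t)^{3/2})) = r(t) cos β(t), r'(t) = u(t) cos β(t), and β'(t) = −2 u(t)/(ε (u(t) − κ/√(u(t)))) − (r(t)²/(ε² (u(t) − κ/√(u(t)))) + u(t)) · sin β(t)/r(t), with initial values u(0) = 1, r(0) = 1, β(0) = 0. Then u is twice differentiable at 0 and u''(0) = (1/(1 + κ/2)³) · ((1 + κ/2)²/ε² + 3κ/(4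 ε⁴)), and in particular u''(0) > 0. -/
/-- Lemma 3.4: in the inviscid Lagrangian fiber spinning system the velocity
is convex at the nozzle, with
`ü(0) = (1/(1+κ/2)³)((1+κ/2)²/ε² + 3κ/(4ε⁴)) > 0`. -/
theorem lagrangian_velocity_convex_at_nozzle
    (ε κ : ℝ) (hε : 0 < ε) (hκ0 : 0 ≤ κ) (hκ1 : κ < 1)
    (u r β : ℝ → ℝ)
    (hpos : ∀ᶠ t in nhds (0 : ℝ),
      0 < u t ∧ 0 < r t ∧ 0 < u t - κ / Real.sqrt (u t))
    (hu : ∀ᶠ t in nhds (0 : ℝ),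
      DifferentiableAt ℝ u t ∧
      ε ^ 2 * deriv u t * (1 + κ / (2 * u t ^ ((3 : ℝ) / 2)))
        = r t * Real.cos (β t))
    (hr : ∀ᶠ t in nhds (0 : ℝ), HasDerivAt r (u t * Real.cos (β t)) t)
    (hβ : ∀ᶠ t in nhds (0 : ℝ),
      HasDerivAt β (-(2 * u t / (ε * (u t - κ / Real.sqrt (u t))))
        - ((r t) ^ 2 / (ε ^ 2 * (u t - κ / Real.sqrt (u t))) + u t)
          * Real.sin (β t) / r t) t)
    (hu0 : u 0 = 1) (hr0 : r 0 = 1) (hβ0 : β 0 = 0) :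
    HasDerivAt (deriv u)
      ((1 / (1 + κ / 2) ^ 3) * ((1 + κ / 2) ^ 2 / ε ^ 2 + 3 * κ / (4 * ε ^ 4))) 0
    ∧ 0 < (1 / (1 + κ / 2) ^ 3) * ((1 + κ / 2) ^ 2 / ε ^ 2 + 3 * κ / (4 * ε ^ 4)) := by
  have hA : 0 < 1 + κ / 2 := by positivity
  refine ⟨?_, by positivity⟩
  have hu' := hu.self_of_nhds
  have hr' := hr.self_of_nhds
  have hb' := hβ.self_of_nhds
  obtain ⟨hud, hue⟩ := hu'
  have hu1 : deriv u 0 = 1 / (ε ^ 2 * (1 + κ / 2)) := by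
    rw [hu0, hr0, hβ0] at hue
    simp only [Real.one_rpow, Real.cos_zero, mul_one] at hue
    rw [eq_div_iff (by positivity)]
    linarith
  have hev : deriv u =ᶠ[nhds 0] fun t =>
      (r t * Real.cos (β t)) / (ε ^ 2 * (1 + κ / (2 * u t ^ ((3 : ℝ) / 2)))) := by
    filter_upwards [hpos, hu] with t ht h
    have h1 := ht.1
    have : 0 < u t ^ ((3 : ℝ) / 2) := Real.rpow_pos_of_pos h1 _
    rw [eq_div_iff (by positivity), ← h.2]
    ring
  refine HasDerivAt.congr_of_eventuallyEq ?_ hev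
  have hp := (hud.hasDerivAt.rpow_const (p := (3 : ℝ) / 2) (Or.inl (by rw [hu0]; norm_num)))
  have hd := ((((hp.const_mul 2).fun_inv (by simp [hu0])).const_mul κ).const_add 1).const_mul (ε ^ 2)
  have hn := hr'.fun_mul hb'.cos
  have hq := hn.fun_div hd (by
    simp only [hu0, Real.one_rpow, mul_one, ← div_eq_mul_inv]; positivity)
  simp only [← div_eq_mul_inv] at hq
  refine HasDerivAt.congr_deriv hq ?_
  rw [hu1]
  simp only [hu0, hr0, hβ0, Real.one_rpow, Real.cos_zero, Real.sin_zero]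
  have hA' : 2 + κ ≠ 0 := by positivity
  field_simp
  ring
end

section
/- Let δ > 0, ε > 0, κ ∈ ℝ and q₀ ∈ ℝ with q₀ ≤ 1 − κ. If (1 − κ − q₀)(3 − (3/2)κ − 2 q₀) − δ/ε² ≥ 0, then q₀ ≤ (5 − (7/2)κ − √((1 + κ/2)² + 8 δ/ε²)) / 4. -/
/-- Upper bound of Theorem 4.2: property (P3), together with `q₀ ≤ 1 − κ`,
yields `q₀ ≤ (5 − (7/2)κ − √((1 + κ/2)² + 8δ/ε²))/4`. -/
theorem q0_upper_bound
    (δ ε κ q₀ : ℝ) (hδ : 0 < δ) (hε : 0 < ε)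
    (hq₁ : q₀ ≤ 1 - κ)
    (hP3 : 0 ≤ (1 - κ - q₀) * (3 - (3 / 2) * κ - 2 * q₀) - δ / ε ^ 2) :
    q₀ ≤ (5 - (7 / 2) * κ - Real.sqrt ((1 + κ / 2) ^ 2 + 8 * δ / ε ^ 2)) / 4 := by
  have hd : 0 < δ / ε ^ 2 := by positivity
  have he : 8 * δ / ε ^ 2 = 8 * (δ / ε ^ 2) := by ring
  rw [he]
  generalize δ / ε ^ 2 = d at *
  have hb : 0 < 3 - (3 / 2) * κ - 2 * q₀ := by
    by_contra h
    have := mul_nonpos_of_nonneg_of_nonpos (sub_nonneg.2 hq₁) (not_lt.1 h)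
    linarith
  have hs : Real.sqrt ((1 + κ / 2) ^ 2 + 8 * d) ≤ 5 - (7 / 2) * κ - 4 * q₀ := by
    apply Real.sqrt_le_iff.2
    constructor
    · linarith
    · nlinarith
  linarith
end

section
/- Let δ > 0, ε > 0 and κ ≥ 0 satisfy 3 (1 − (3/2)κ + κ²/2) ≤ δ/ε². Then there exists no real number q₀ satisfying simultaneously: (P1) 0 < q₀ ≤ 1 − κ, (P2) (2 − κ/2 − q₀)(1 − κ − q₀) − δ/ε² < 0, and (P3) (1 − κ − q₀)(3 − (3/2)κ − 2 q₀) − δ/ε² ≥ 0. -/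
/-- Corollary 4.3 (non-existence of physically relevant solutions):
if `3(1 − (3/2)κ + κ²/2) ≤ δ/ε²` then no `q₀` can satisfy (P1), (P2), (P3). -/
theorem nonexistence_physically_relevant
    (δ ε κ : ℝ) (hδ : 0 < δ) (hε : 0 < ε) (hκ0 : 0 ≤ κ)
    (hcrit : 3 * (1 - (3 / 2) * κ + κ ^ 2 / 2) ≤ δ / ε ^ 2) :
    ¬ ∃ q₀ : ℝ,
      (0 < q₀ ∧ q₀ ≤ 1 - κ) ∧
      ((2 - κ / 2 - q₀) * (1 - κ - q₀) - δ / ε ^ 2 < 0) ∧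
      (0 ≤ (1 - κ - q₀) * (3 - (3 / 2) * κ - 2 * q₀) - δ / ε ^ 2) := by
  rintro ⟨q, ⟨hq, hq1⟩, -, h3⟩
  have h : 0 < q * ((3 - (3 / 2) * κ) + 2 * (1 - κ - q)) :=
    mul_pos hq (by linarith)
  nlinarith [h]
end
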